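/- arXiv:math/0702609 — 2 statements merged into one kernel-verified Lean document; each statement's English description precedes it below -/
import Mathlib

section
/- Let g be a bounded probability density on ℝ that is continuous at 0 with g(0) > 0, and let q be a probability density on (0,∞) that is positive, continuously differentiable and strictly increasing on some (0, u₀], belongs to the class Γ at 0 with auxiliary function ρ(u) = q(u)/q′(u), with ρ nondecreasing on (0, u₀] and ρ(s)/s → 0 as s → 0⁺. Define m(v) = v·∫_{−1}^{1} (g(vt)/√(1−t²)) · q(v√(1−t²)) dt. Then (i) m(v) ∼ Γ(1/2)·√(2 v ρ(v)) · g(0) · q(v) as v → 0⁺ (where Γ(1/2) = √π); (ii) if additionally g̃ is a second bounded density continuous at 0 with g̃(0) > 0, then m₂(v) = v²·∫₀^{2π}∫₀¹ (x/√(1−x²)) · g(vx cos θ) · g̃(vx sin θ) · q(v√(1−x²)) dx dθ satisfies m₂(v) ∼ 2π · g(0) · g̃(0) · v ρ(v) · q(v) as v → 0⁺; (iii) if moreover m belongs to the class Γ at 0, then ρ is an auxiliary function for m, i.e. for every x ∈ ℝ, m(v + ρ(v)x)/m(v) → exp(x) as v → 0⁺. -/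
open MeasureTheory Filter Real Set
open scoped Topology

/-! With `t = sin φ`, `m` and `m₂` become integrals over the quarter circle in which `q` is
evaluated at `v cos φ`. As `q` decays from `v` downwards on the scale `ρ v ≪ v`, only `φ ≈ 0`
matters: the `g`-factors can be frozen at `0`, and swapping the two coordinates of the circle and
putting `cos φ = 1 - (ρ v / v) y` turns the rest into a Gamma integral. Since `1 / ρ` is the
derivative of `log q` and `ρ` is nondecreasing, `q (v - ρ v * y) / q v ≤ exp (-y)`, which
dominates. The same inequalities between `log q` and `ρ` show that `ρ` is self-neglecting, so the
prefactor `√(v ρ v)` does not disturb the class Γ. -/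

section GammaClass

/-- `ρ` is an auxiliary function of `f` in the class Γ at `0`. Positivity and measurability of `f`
and `ρ`, part of the usual definition, are left out: they are stated where they are needed. -/
structure IsGammaAux (f ρ : ℝ → ℝ) : Prop where
  tendsto_aux_div : Tendsto (fun s => ρ s / s) (𝓝[>] 0) (𝓝 0)
  tendsto_ratio : ∀ x, Tendsto (fun h => f (h + ρ h * x) / f h) (𝓝[>] 0) (𝓝 (exp x))

variable {f q w ρ : ℝ → ℝ}

theorem IsGammaAux.tendsto_shift_div (h : IsGammaAux f ρ) (x : ℝ) :
    Tendsto (fun v => (v + ρ v * x) / v) (𝓝[>] 0) (𝓝 1) := by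
  have hlim := (h.tendsto_aux_div.mul_const x).const_add 1
  rw [zero_mul, add_zero] at hlim
  refine hlim.congr' ?_
  filter_upwards [self_mem_nhdsWithin] with v (hv : 0 < v)
  field_simp

theorem IsGammaAux.tendsto_shift (h : IsGammaAux f ρ) (x : ℝ) :
    Tendsto (fun v => v + ρ v * x) (𝓝[>] 0) (𝓝[>] 0) := by
  refine tendsto_nhdsWithin_iff.2 ⟨?_, ?_⟩
  · have hlim := (h.tendsto_shift_div x).mul (tendsto_id.mono_left nhdsWithin_le_nhds)
    rw [mul_zero] at hlim
    refine hlim.congr' ?_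
    filter_upwards [self_mem_nhdsWithin] with v (hv : 0 < v)
    exact div_mul_cancel₀ _ hv.ne'
  · filter_upwards [self_mem_nhdsWithin,
      (h.tendsto_shift_div x).eventually (lt_mem_nhds zero_lt_one)] with v hv hpos
    exact (div_pos_iff_of_pos_right hv).1 hpos

theorem IsGammaAux.of_tendsto_div (h : IsGammaAux q ρ)
    (hw : ∀ x, Tendsto (fun v => w (v + ρ v * x) / w v) (𝓝[>] 0) (𝓝 1)) {c : ℝ} (hc : c ≠ 0)
    (hf : Tendsto (fun v => f v / (w v * q v)) (𝓝[>] 0) (𝓝 c)) : IsGammaAux f ρ where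
  tendsto_aux_div := h.tendsto_aux_div
  tendsto_ratio x := by
    have hshift := hf.comp (h.tendsto_shift x)
    have hlim := (hshift.div hf hc).mul ((hw x).mul (h.tendsto_ratio x))
    rw [div_self hc, one_mul, one_mul] at hlim
    refine hlim.congr' ?_
    filter_upwards [hf.eventually_ne hc, hshift.eventually_ne hc] with v hv hv'
    simp only [Function.comp_apply, ne_eq, div_eq_zero_iff, mul_eq_zero, not_or] at hv hv'
    obtain ⟨_, hw0, hq0⟩ := hv
    obtain ⟨_, hw0', hq0'⟩ := hv'
    simp only [Pi.div_apply, Function.comp_apply]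
    field_simp

end GammaClass

/-- `q` vanishes on `(-∞, 0]` and is positive and differentiable on `(0, u₀)`, and `ρ = q / q'` is
positive and nondecreasing there. The relation `q' = q / ρ` is stated as a derivative of `q`, which
rules out the junk values of `deriv` and of division by zero. -/
structure HasMonotoneAux (q ρ : ℝ → ℝ) (u₀ : ℝ) : Prop where
  zero_lt : 0 < u₀
  eq_zero : ∀ t ≤ 0, q t = 0
  pos : ∀ u ∈ Ioo 0 u₀, 0 < q u
  aux_pos : ∀ u ∈ Ioo 0 u₀, 0 < ρ u
  hasDerivAt : ∀ u ∈ Ioo 0 u₀, HasDerivAt q (q u / ρ u) u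
  aux_mono : MonotoneOn ρ (Ioo 0 u₀)

namespace HasMonotoneAux

variable {q ρ : ℝ → ℝ} {u₀ : ℝ}

theorem of_eq_div_deriv (hu₀ : 0 < u₀) (hq_zero : ∀ t ≤ 0, q t = 0)
    (hq_pos : ∀ u ∈ Ioc 0 u₀, 0 < q u) (hq : ContDiffOn ℝ 1 q (Ioc 0 u₀))
    (hρ : ∀ u ∈ Ioc 0 u₀, ρ u = q u / deriv q u) (hρ_pos : ∀ u ∈ Ioc 0 u₀, 0 < ρ u)
    (hρ_mono : MonotoneOn ρ (Ioc 0 u₀)) : HasMonotoneAux q ρ u₀ where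
  zero_lt := hu₀
  eq_zero := hq_zero
  pos u hu := hq_pos u (Ioo_subset_Ioc_self hu)
  aux_pos u hu := hρ_pos u (Ioo_subset_Ioc_self hu)
  hasDerivAt u hu := by
    have hdiff : DifferentiableAt ℝ q u :=
      (hq.differentiableOn one_ne_zero).differentiableAt (Ioc_mem_nhds hu.1 hu.2)
    rw [hρ u (Ioo_subset_Ioc_self hu), div_div_cancel₀ (hq_pos u (Ioo_subset_Ioc_self hu)).ne']
    exact hdiff.hasDerivAt
  aux_mono := hρ_mono.mono Ioo_subset_Ioc_self

section LogDerivative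

theorem nonneg (h : HasMonotoneAux q ρ u₀) {u : ℝ} (hu : u < u₀) : 0 ≤ q u := by
  rcases le_or_gt u 0 with hu' | hu'
  · exact (h.eq_zero u hu').ge
  · exact (h.pos u ⟨hu', hu⟩).le

theorem eventually_mem_Ioo (h : HasMonotoneAux q ρ u₀) : ∀ᶠ v in 𝓝[>] 0, v ∈ Ioo 0 u₀ :=
  Ioo_mem_nhdsGT h.zero_lt

theorem exists_log_sub_log_eq (h : HasMonotoneAux q ρ u₀) {a b : ℝ} (ha : 0 < a) (hab : a < b)
    (hb : b < u₀) : ∃ c ∈ Ioo a b, log (q b) - log (q a) = (b - a) / ρ c := by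
  have hderiv : ∀ u ∈ Icc a b, HasDerivAt (fun x => log (q x)) (1 / ρ u) u := fun u hu => by
    have hu' : u ∈ Ioo 0 u₀ := ⟨ha.trans_le hu.1, hu.2.trans_lt hb⟩
    have hlog := (h.hasDerivAt u hu').log (h.pos u hu').ne'
    rwa [div_right_comm, div_self (h.pos u hu').ne'] at hlog
  obtain ⟨c, hc, hslope⟩ := exists_hasDerivAt_eq_slope (fun x => log (q x)) (fun u => 1 / ρ u) hab
    (fun u hu => (hderiv u hu).continuousAt.continuousWithinAt)
    (fun u hu => hderiv u (Ioo_subset_Icc_self hu))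
  refine ⟨c, hc, ?_⟩
  rw [div_eq_mul_one_div, hslope, mul_div_cancel₀ _ (sub_pos.2 hab).ne']

theorem div_le_log_sub_log (h : HasMonotoneAux q ρ u₀) {a b : ℝ} (ha : 0 < a) (hab : a < b)
    (hb : b < u₀) : (b - a) / ρ b ≤ log (q b) - log (q a) := by
  obtain ⟨c, ⟨hac, hcb⟩, hlog⟩ := h.exists_log_sub_log_eq ha hab hb
  have hc : c ∈ Ioo 0 u₀ := ⟨ha.trans hac, hcb.trans hb⟩
  rw [hlog]
  exact div_le_div_of_nonneg_left (sub_pos.2 hab).le (h.aux_pos c hc)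
    (h.aux_mono hc ⟨ha.trans hab, hb⟩ hcb.le)

theorem log_sub_log_le_div (h : HasMonotoneAux q ρ u₀) {a b : ℝ} (ha : 0 < a) (hab : a < b)
    (hb : b < u₀) : log (q b) - log (q a) ≤ (b - a) / ρ a := by
  obtain ⟨c, ⟨hac, hcb⟩, hlog⟩ := h.exists_log_sub_log_eq ha hab hb
  have ha' : a ∈ Ioo 0 u₀ := ⟨ha, hab.trans hb⟩
  rw [hlog]
  exact div_le_div_of_nonneg_left (sub_pos.2 hab).le (h.aux_pos a ha')
    (h.aux_mono ha' ⟨ha.trans hac, hcb.trans hb⟩ hac.le)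

theorem ratio_le_exp_neg (h : HasMonotoneAux q ρ u₀) {v y : ℝ} (hv : v ∈ Ioo 0 u₀) (hy : 0 < y) :
    q (v - ρ v * y) / q v ≤ exp (-y) := by
  have hρ := h.aux_pos v hv
  rcases le_or_gt (v - ρ v * y) 0 with hneg | hpos
  · rw [h.eq_zero _ hneg, zero_div]
    exact (exp_pos _).le
  · have hlt : v - ρ v * y < v := sub_lt_self v (mul_pos hρ hy)
    have hlog := h.div_le_log_sub_log hpos hlt hv.2
    rw [sub_sub_cancel, mul_div_cancel_left₀ _ hρ.ne'] at hlog
    have hq := h.pos v hv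
    have hq' := h.pos _ ⟨hpos, hlt.trans hv.2⟩
    rw [← log_le_iff_le_exp (div_pos hq' hq), log_div hq'.ne' hq.ne']
    linarith

theorem aestronglyMeasurable_restrict_Iio (h : HasMonotoneAux q ρ u₀) :
    AEStronglyMeasurable q (volume.restrict (Iio u₀)) := by
  rw [← Iic_union_Ioo_eq_Iio h.zero_lt, aestronglyMeasurable_union_iff]
  constructor
  · refine (aestronglyMeasurable_const (b := (0 : ℝ))).congr ?_
    filter_upwards [ae_restrict_mem measurableSet_Iic] with t ht using (h.eq_zero t ht).symm
  · exact ContinuousOn.aestronglyMeasurable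
      (fun u hu => (h.hasDerivAt u hu).continuousAt.continuousWithinAt) measurableSet_Ioo

theorem aestronglyMeasurable_comp_sub_mul (h : HasMonotoneAux q ρ u₀) {v r : ℝ} (hv : v < u₀)
    (hr : 0 < r) : AEStronglyMeasurable (fun y => q (v - r * y)) (volume.restrict (Ioi 0)) := by
  refine h.aestronglyMeasurable_restrict_Iio.comp_quasiMeasurePreserving
    (Measure.QuasiMeasurePreserving.restrict
      ((quasiMeasurePreserving_sub_left_of_right_invariant volume v).comp
        (Measure.quasiMeasurePreserving_smul volume hr.ne')) fun y hy => ?_)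
  have hy' : 0 < r * y := mul_pos hr hy
  simp only [Function.comp_apply, smul_eq_mul, mem_Iio]
  linarith

end LogDerivative

section SelfNeglecting

theorem tendsto_log_ratio (h : HasMonotoneAux q ρ u₀) (hΓ : IsGammaAux q ρ) (x : ℝ) :
    Tendsto (fun v => log (q (v + ρ v * x)) - log (q v)) (𝓝[>] 0) (𝓝 x) := by
  have hlog := (hΓ.tendsto_ratio x).log (exp_pos x).ne'
  rw [log_exp] at hlog
  refine hlog.congr' ?_
  filter_upwards [h.eventually_mem_Ioo, (hΓ.tendsto_shift x).eventually h.eventually_mem_Ioo]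
    with v hv hv'
  exact log_div (h.pos _ hv').ne' (h.pos _ hv).ne'

-- Between `v + ρ v * x` and its translates by `± ρ v` the increment of `log q` tends to `1`, while
-- monotonicity of `ρ` bounds it on the relevant side by `ρ v / ρ (v + ρ v * x)`.
theorem tendsto_aux_shift_div (h : HasMonotoneAux q ρ u₀) (hΓ : IsGammaAux q ρ) (x : ℝ) :
    Tendsto (fun v => ρ (v + ρ v * x) / ρ v) (𝓝[>] 0) (𝓝 1) := by
  suffices hinv : Tendsto (fun v => ρ v / ρ (v + ρ v * x)) (𝓝[>] 0) (𝓝 1) by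
    simpa only [inv_div, inv_one] using hinv.inv₀ one_ne_zero
  have hlower := (h.tendsto_log_ratio hΓ (x + 1)).sub (h.tendsto_log_ratio hΓ x)
  have hupper := (h.tendsto_log_ratio hΓ x).sub (h.tendsto_log_ratio hΓ (x - 1))
  rw [add_sub_cancel_left] at hlower
  rw [sub_sub_cancel] at hupper
  have hshift := fun y => (hΓ.tendsto_shift y).eventually h.eventually_mem_Ioo
  refine tendsto_of_tendsto_of_tendsto_of_le_of_le' hlower hupper ?_ ?_
  · filter_upwards [h.eventually_mem_Ioo, hshift x, hshift (x + 1)] with v hv hx hx1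
    have hρ := h.aux_pos v hv
    have hlog := h.log_sub_log_le_div hx.1 (by linarith : v + ρ v * x < v + ρ v * (x + 1)) hx1.2
    rw [show v + ρ v * (x + 1) - (v + ρ v * x) = ρ v by ring] at hlog
    linarith
  · filter_upwards [h.eventually_mem_Ioo, hshift x, hshift (x - 1)] with v hv hx hx1
    have hρ := h.aux_pos v hv
    have hlog := h.div_le_log_sub_log hx1.1 (by linarith : v + ρ v * (x - 1) < v + ρ v * x) hx.2
    rw [show v + ρ v * x - (v + ρ v * (x - 1)) = ρ v by ring] at hlog
    linarith

theorem tendsto_sqrt_shift_div (h : HasMonotoneAux q ρ u₀) (hΓ : IsGammaAux q ρ) (x : ℝ) :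
    Tendsto (fun v => √(2 * (v + ρ v * x) * ρ (v + ρ v * x)) / √(2 * v * ρ v)) (𝓝[>] 0)
      (𝓝 1) := by
  have hlim := ((hΓ.tendsto_shift_div x).mul (h.tendsto_aux_shift_div hΓ x)).sqrt
  rw [mul_one, sqrt_one] at hlim
  refine hlim.congr' ?_
  filter_upwards [h.eventually_mem_Ioo] with v hv
  have hv0 := hv.1
  have hρ := h.aux_pos v hv
  rw [← sqrt_div' _ (by positivity)]
  congr 1
  field_simp

end SelfNeglecting

section Laplace

theorem abs_mul_ratio_mul_rpow_le (h : HasMonotoneAux q ρ u₀) {v : ℝ} (hv : v ∈ Ioo 0 u₀)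
    {k : ℝ → ℝ} {M : ℝ} (hkM : ∀ s ∈ Icc 0 1, |k s| ≤ M) {y : ℝ} (hy : 0 < y) {β : ℝ} :
    |k (1 - ρ v / v * y) * (q (v - ρ v * y) / q v * y ^ β)| ≤ M * (exp (-y) * y ^ β) := by
  have hv0 := hv.1
  have hρ := h.aux_pos v hv
  have hM : 0 ≤ M := (abs_nonneg _).trans (hkM 0 (left_mem_Icc.2 zero_le_one))
  rcases le_or_gt (v - ρ v * y) 0 with hneg | hpos
  · rw [h.eq_zero _ hneg, zero_div, zero_mul, mul_zero, abs_zero]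
    positivity
  · have hle : ρ v / v * y ≤ 1 := by
      rw [div_mul_eq_mul_div, div_le_one hv0]
      linarith
    have hmem : 1 - ρ v / v * y ∈ Icc (0 : ℝ) 1 :=
      ⟨sub_nonneg.2 hle, sub_le_self _ (by positivity)⟩
    have hq : 0 ≤ q (v - ρ v * y) / q v :=
      div_nonneg (h.nonneg (by nlinarith [hv.2])) (h.nonneg hv.2)
    rw [abs_mul, abs_of_nonneg (mul_nonneg hq (by positivity))]
    gcongr
    · exact hkM _ hmem
    · exact h.ratio_le_exp_neg hv hy

theorem tendsto_integral_rpow_mul_ratio (h : HasMonotoneAux q ρ u₀) (hΓ : IsGammaAux q ρ)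
    {α M : ℝ} (hα : 0 < α) {k : ℝ → ℝ} (hk : Measurable k) (hkM : ∀ s ∈ Icc 0 1, |k s| ≤ M)
    (hk1 : ContinuousAt k 1) :
    Tendsto (fun v => ∫ y in Ioi 0,
        k (1 - ρ v / v * y) * (q (v - ρ v * y) / q v * y ^ (α - 1)))
      (𝓝[>] 0) (𝓝 (k 1 * Gamma α)) := by
  rw [Gamma_eq_integral hα, ← integral_const_mul]
  refine tendsto_integral_filter_of_dominated_convergence
    (fun y => M * (exp (-y) * y ^ (α - 1))) ?_ ?_ ((GammaIntegral_convergent hα).const_mul M) ?_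
  · filter_upwards [h.eventually_mem_Ioo] with v hv
    have hq := h.aestronglyMeasurable_comp_sub_mul hv.2 (h.aux_pos v hv)
    have hk' : Measurable fun y => k (1 - ρ v / v * y) := by fun_prop
    have hpow : Measurable fun y : ℝ => y ^ (α - 1) := by fun_prop
    simp only [div_eq_mul_inv (q _)]
    exact hk'.aestronglyMeasurable.mul ((hq.mul_const _).mul hpow.aestronglyMeasurable)
  · filter_upwards [h.eventually_mem_Ioo] with v hv
    filter_upwards [ae_restrict_mem measurableSet_Ioi] with y hy
    exact h.abs_mul_ratio_mul_rpow_le hv hkM hy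
  · refine Eventually.of_forall fun y => ?_
    have harg : Tendsto (fun v => 1 - ρ v / v * y) (𝓝[>] 0) (𝓝 1) := by
      simpa only [zero_mul, sub_zero] using (hΓ.tendsto_aux_div.mul_const y).const_sub 1
    have hq : Tendsto (fun v => q (v - ρ v * y) / q v) (𝓝[>] 0) (𝓝 (exp (-y))) := by
      simpa only [mul_neg, ← sub_eq_add_neg] using hΓ.tendsto_ratio (-y)
    exact (hk1.tendsto.comp harg).mul (hq.mul_const _)

end Laplace

end HasMonotoneAux

theorem integral_zero_one_eq_integral_Ioi_comp_one_sub_mul {f : ℝ → ℝ} (hf : ∀ s ≤ 0, f s = 0)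
    {c : ℝ} (hc : 0 < c) : ∫ s in 0..1, f s = c * ∫ y in Ioi 0, f (1 - c * y) := by
  have hvanish : ∫ t in Ioi 0, f (1 - t) = ∫ t in Ioc 0 1, f (1 - t) :=
    setIntegral_eq_of_subset_of_forall_sdiff_eq_zero measurableSet_Ioi Ioc_subset_Ioi_self
      fun t ht => hf _ (sub_nonpos.2 (not_le.1 fun hle => ht.2 ⟨ht.1, hle⟩).le)
  have hreflect : ∫ t in 0..1, f (1 - t) = ∫ s in 0..1, f s := by
    rw [intervalIntegral.integral_comp_sub_left, sub_self, sub_zero]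
  rw [← hreflect, intervalIntegral.integral_of_le zero_le_one, ← hvanish, ← smul_eq_mul,
    integral_comp_mul_left_Ioi' (fun t => f (1 - t)) 0 hc, mul_zero]

-- Watson's lemma at the endpoint `s = 1`, with `ρ v / v` as the scale on which `q (v * s)` decays.
theorem HasMonotoneAux.tendsto_integral_mul_one_sub_rpow {q ρ : ℝ → ℝ} {u₀ : ℝ}
    (h : HasMonotoneAux q ρ u₀) (hΓ : IsGammaAux q ρ) {α M : ℝ} (hα : 0 < α) {k : ℝ → ℝ}
    (hk : Measurable k) (hkM : ∀ s ∈ Icc 0 1, |k s| ≤ M) (hk1 : ContinuousAt k 1) :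
    Tendsto (fun v => (∫ s in 0..1, k s * (1 - s) ^ (α - 1) * q (v * s)) / ((ρ v / v) ^ α * q v))
      (𝓝[>] 0) (𝓝 (k 1 * Gamma α)) := by
  refine (h.tendsto_integral_rpow_mul_ratio hΓ hα hk hkM hk1).congr' ?_
  filter_upwards [h.eventually_mem_Ioo] with v hv
  have hv0 := hv.1
  have hq := h.pos v hv
  have hc : 0 < ρ v / v := div_pos (h.aux_pos v hv) hv0
  have hzero : ∀ s ≤ 0, k s * (1 - s) ^ (α - 1) * q (v * s) = 0 := fun s hs => by
    rw [h.eq_zero _ (mul_nonpos_of_nonneg_of_nonpos hv0.le hs), mul_zero]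
  rw [integral_zero_one_eq_integral_Ioi_comp_one_sub_mul hzero hc, eq_div_iff (by positivity),
    mul_comm, ← integral_const_mul, ← integral_const_mul]
  refine setIntegral_congr_fun measurableSet_Ioi fun y (hy : 0 < y) => ?_
  have hpow : (ρ v / v) ^ α = ρ v / v * (ρ v / v) ^ (α - 1) := by
    rw [← rpow_one_add' hc.le (by simpa using hα.ne'), add_sub_cancel]
  have harg : v * (1 - ρ v / v * y) = v - ρ v * y := by field_simp
  simp only [sub_sub_cancel]
  rw [hpow, harg, mul_rpow hc.le hy.le]
  field_simp

section QuarterCircle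

theorem bijOn_sqrt_one_sub_sq : BijOn (fun s : ℝ => √(1 - s ^ 2)) (Ioo 0 1) (Ioo 0 1) := by
  have hmaps : MapsTo (fun s : ℝ => √(1 - s ^ 2)) (Ioo 0 1) (Ioo 0 1) := fun s hs =>
    ⟨sqrt_pos.2 (by nlinarith [hs.1, hs.2]), (sqrt_lt' one_pos).2 (by nlinarith [hs.1])⟩
  have hinv : LeftInvOn (fun s : ℝ => √(1 - s ^ 2)) (fun s => √(1 - s ^ 2)) (Ioo 0 1) :=
    fun s hs => by
      simp only
      rw [sq_sqrt (by nlinarith [hs.1, hs.2]), sub_sub_cancel, sqrt_sq hs.1.le]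
  exact InvOn.bijOn ⟨hinv, hinv⟩ hmaps hmaps

theorem hasDerivAt_sqrt_one_sub_sq {s : ℝ} (hs : 1 - s ^ 2 ≠ 0) :
    HasDerivAt (fun s => √(1 - s ^ 2)) (-(s / √(1 - s ^ 2))) s := by
  have hsub : HasDerivAt (fun s : ℝ => 1 - s ^ 2) (-(2 * s)) s := by
    simpa using (hasDerivAt_pow 2 s).const_sub 1
  refine (hsub.sqrt hs).congr_deriv ?_
  rw [neg_div, mul_div_mul_left _ _ two_ne_zero]

theorem integral_div_sqrt_one_sub_sq_swap (H : ℝ → ℝ → ℝ) :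
    ∫ t in 0..1, H t √(1 - t ^ 2) / √(1 - t ^ 2) =
      ∫ s in 0..1, H √(1 - s ^ 2) s / √(1 - s ^ 2) := by
  have hsubst := integral_image_eq_integral_abs_deriv_smul measurableSet_Ioo
    (fun s hs => (hasDerivAt_sqrt_one_sub_sq
      (by nlinarith [hs.1, hs.2] : 1 - s ^ 2 ≠ 0)).hasDerivWithinAt)
    bijOn_sqrt_one_sub_sq.injOn (fun t => H t √(1 - t ^ 2) / √(1 - t ^ 2))
  rw [bijOn_sqrt_one_sub_sq.image_eq] at hsubst
  simp only [intervalIntegral.integral_of_le zero_le_one, integral_Ioc_eq_integral_Ioo]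
  rw [hsubst]
  refine setIntegral_congr_fun measurableSet_Ioo fun s hs => ?_
  have hs0 := hs.1
  have hinv : √(1 - √(1 - s ^ 2) ^ 2) = s := by
    rw [sq_sqrt (by nlinarith [hs.1, hs.2]), sub_sub_cancel, sqrt_sq hs0.le]
  simp only [hinv, abs_neg, smul_eq_mul]
  rw [abs_of_nonneg (by positivity)]
  field_simp

theorem integral_neg_self_comp_abs {f : ℝ → ℝ} {a : ℝ} (ha : 0 ≤ a) :
    ∫ t in -a..a, f |t| = 2 * ∫ t in 0..a, f t := by
  have hind : (Icc (-a) a).indicator (fun t => f |t|) = fun t => (Iic a).indicator f |t| := by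
    ext t
    simp only [indicator_apply, mem_Icc, mem_Iic, abs_le]
  rw [intervalIntegral.integral_of_le (neg_le_self ha), ← integral_Icc_eq_integral_Ioc,
    ← integral_indicator measurableSet_Icc, hind, integral_comp_abs,
    setIntegral_indicator measurableSet_Iic, Ioi_inter_Iic, intervalIntegral.integral_of_le ha]

theorem integral_neg_one_one_div_sqrt_one_sub_sq (F : ℝ → ℝ) :
    ∫ t in (-1)..1, F √(1 - t ^ 2) / √(1 - t ^ 2) = 2 * ∫ s in 0..1, F s / √(1 - s ^ 2) := by
  rw [← integral_div_sqrt_one_sub_sq_swap fun _ s => F s,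
    ← integral_neg_self_comp_abs zero_le_one]
  simp only [sq_abs]

theorem integral_zero_one_mul_div_sqrt_one_sub_sq (F : ℝ → ℝ) :
    ∫ t in 0..1, t * F √(1 - t ^ 2) / √(1 - t ^ 2) = ∫ s in 0..1, F s := by
  rw [integral_div_sqrt_one_sub_sq_swap fun t s => t * F s]
  simp only [intervalIntegral.integral_of_le zero_le_one, integral_Ioc_eq_integral_Ioo]
  refine setIntegral_congr_fun measurableSet_Ioo fun s hs => ?_
  have hpos : 0 < √(1 - s ^ 2) := (bijOn_sqrt_one_sub_sq.mapsTo hs).1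
  exact mul_div_cancel_left₀ _ hpos.ne'

end QuarterCircle

section RadialWeights

variable {q ρ : ℝ → ℝ} {u₀ : ℝ}

theorem HasMonotoneAux.tendsto_planar_weight (h : HasMonotoneAux q ρ u₀) (hΓ : IsGammaAux q ρ) :
    Tendsto (fun v => (∫ t in (-1)..1, q (v * √(1 - t ^ 2)) / √(1 - t ^ 2)) /
      (√(2 * v * ρ v) * q v / v)) (𝓝[>] 0) (𝓝 (Gamma (1 / 2))) := by
  have hbound : ∀ s ∈ Icc (0 : ℝ) 1, |(√(1 + s))⁻¹| ≤ 1 := fun s hs => by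
    rw [abs_of_nonneg (by positivity)]
    exact inv_le_one_of_one_le₀ (one_le_sqrt.2 (by linarith [hs.1]))
  have hcont : ContinuousAt (fun s : ℝ => (√(1 + s))⁻¹) 1 :=
    ContinuousAt.inv₀ (by fun_prop) (by positivity)
  have hlim := (h.tendsto_integral_mul_one_sub_rpow hΓ one_half_pos
    (k := fun s => (√(1 + s))⁻¹) (by fun_prop) hbound hcont).const_mul √2
  rw [one_add_one_eq_two, mul_inv_cancel_left₀ (by positivity)] at hlim
  refine hlim.congr' ?_
  filter_upwards [h.eventually_mem_Ioo] with v hv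
  have hv0 := hv.1
  have hρ := h.aux_pos v hv
  have hq := h.pos v hv
  have hkernel : ∫ s in 0..1, (√(1 + s))⁻¹ * (1 - s) ^ ((1 / 2 : ℝ) - 1) * q (v * s) =
      ∫ s in 0..1, q (v * s) / √(1 - s ^ 2) := by
    refine intervalIntegral.integral_congr fun s hs => ?_
    rw [uIcc_of_le zero_le_one] at hs
    have hfactor : 1 - s ^ 2 = (1 + s) * (1 - s) := by ring
    rw [show (1 / 2 : ℝ) - 1 = -(1 / 2) by norm_num, rpow_neg (sub_nonneg.2 hs.2),
      ← sqrt_eq_rpow, hfactor, sqrt_mul (by linarith [hs.1]), ← mul_inv, mul_comm,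
      div_eq_mul_inv]
  have hscale : √(2 * v * ρ v) = √2 * (v * √(ρ v / v)) := by
    rw [mul_assoc, sqrt_mul zero_le_two, ← sqrt_sq hv0.le, ← sqrt_mul (sq_nonneg _),
      sqrt_sq hv0.le]
    congr 2
    field_simp
  have hsqrt2 : √2 ^ 2 = (2 : ℝ) := sq_sqrt zero_le_two
  rw [hkernel, ← sqrt_eq_rpow, integral_neg_one_one_div_sqrt_one_sub_sq fun s => q (v * s),
    hscale]
  field_simp
  rw [hsqrt2, mul_comm]

theorem HasMonotoneAux.tendsto_spatial_weight (h : HasMonotoneAux q ρ u₀) (hΓ : IsGammaAux q ρ) :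
    Tendsto (fun v => (∫ x in 0..1, x * q (v * √(1 - x ^ 2)) / √(1 - x ^ 2)) /
      (ρ v * q v / v)) (𝓝[>] 0) (𝓝 1) := by
  have hlim := h.tendsto_integral_mul_one_sub_rpow hΓ one_pos (k := fun _ => 1)
    measurable_const (fun _ _ => abs_one.le) continuousAt_const
  simp only [sub_self, rpow_zero, rpow_one, one_mul, Gamma_one] at hlim
  refine hlim.congr fun v => ?_
  rw [integral_zero_one_mul_div_sqrt_one_sub_sq fun s => q (v * s), div_mul_eq_mul_div]

end RadialWeights

section FrozenFactor

variable {ι X : Type*} [MeasurableSpace X] {μ : Measure X} {l : Filter ι} {G W : ι → X → ℝ}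
  {c L : ℝ} {d : ι → ℝ}

theorem eventually_integrable_of_tendsto_integral_div (hL : L ≠ 0)
    (hW : Tendsto (fun i => (∫ x, W i x ∂μ) / d i) l (𝓝 L)) : ∀ᶠ i in l, Integrable (W i) μ :=
  (hW.eventually_ne hL).mono fun _ hi => Integrable.of_integral_ne_zero (div_ne_zero_iff.1 hi).1

theorem eventually_integrable_mul (hW : ∀ᶠ i in l, Integrable (W i) μ)
    (hG : ∀ᶠ i in l, AEStronglyMeasurable (G i) μ)
    (hGc : Tendsto (fun p : ι × X => G p.1 p.2) (l ×ˢ ae μ) (𝓝 c)) :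
    ∀ᶠ i in l, Integrable (fun x => G i x * W i x) μ := by
  filter_upwards [hW, hG, (Metric.tendsto_nhds.1 hGc 1 one_pos).curry] with i hWi hGi hi
  refine hWi.bdd_mul (c := 1 + ‖c‖) hGi (hi.mono fun x hx => ?_)
  rw [dist_eq_norm] at hx
  linarith [norm_le_norm_sub_add (G i x) c]

theorem tendsto_integral_mul_div_of_tendsto (hL : L ≠ 0)
    (hW : Tendsto (fun i => (∫ x, W i x ∂μ) / d i) l (𝓝 L))
    (hW0 : ∀ᶠ i in l, ∀ᵐ x ∂μ, 0 ≤ W i x) (hG : ∀ᶠ i in l, AEStronglyMeasurable (G i) μ)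
    (hGc : Tendsto (fun p : ι × X => G p.1 p.2) (l ×ˢ ae μ) (𝓝 c)) :
    Tendsto (fun i => (∫ x, G i x * W i x ∂μ) / d i) l (𝓝 (c * L)) := by
  have hWi := eventually_integrable_of_tendsto_integral_div hL hW
  have hGW := eventually_integrable_mul hWi hG hGc
  suffices herr : Tendsto (fun i => (∫ x, (G i x - c) * W i x ∂μ) / d i) l (𝓝 0) by
    have hlim := herr.add (hW.const_mul c)
    rw [zero_add] at hlim
    refine hlim.congr' ?_
    filter_upwards [hWi, hGW] with i hWi hGWi
    simp only [sub_mul]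
    rw [integral_sub hGWi (hWi.const_mul c), integral_const_mul]
    ring
  refine (Asymptotics.isLittleO_one_iff ℝ).1 (Asymptotics.IsLittleO.trans_isBigO
    (g := fun i => (∫ x, W i x ∂μ) / d i) (.of_bound fun ε hε => ?_) (hW.isBigO_one ℝ))
  filter_upwards [hWi, hW0, (Metric.tendsto_nhds.1 hGc ε hε).curry] with i hWi hW0 hGi
  have hbound : ‖∫ x, (G i x - c) * W i x ∂μ‖ ≤ ε * ∫ x, W i x ∂μ := by
    rw [← integral_const_mul]
    refine norm_integral_le_of_norm_le (hWi.const_mul ε) ?_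
    filter_upwards [hW0, hGi] with x hx hdist
    rw [norm_mul, norm_of_nonneg hx, ← dist_eq_norm]
    gcongr
  rw [norm_div, norm_div, ← mul_div_assoc, norm_of_nonneg (integral_nonneg_of_ae hW0)]
  gcongr

theorem tendsto_comp_mul_prod_ae {g : ℝ → ℝ} (hg : ContinuousAt g 0) {b : X → ℝ} {C : ℝ}
    (hb : ∀ᵐ x ∂μ, |b x| ≤ C) :
    Tendsto (fun p : ℝ × X => g (p.1 * b p.2)) (𝓝[>] 0 ×ˢ ae μ) (𝓝 (g 0)) := by
  have hfst : Tendsto (fun p : ℝ × X => p.1) (𝓝[>] 0 ×ˢ ae μ) (𝓝 0) :=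
    tendsto_fst.mono_right nhdsWithin_le_nhds
  exact hg.tendsto.comp
    (hfst.zero_mul_isBoundedUnder_le (isBoundedUnder_of_eventually_le (tendsto_snd.eventually hb)))

theorem eventually_aestronglyMeasurable_comp_mul {g : ℝ → ℝ}
    (hg : AEStronglyMeasurable g volume) {b : X → ℝ}
    (hb : Measure.QuasiMeasurePreserving b μ volume) :
    ∀ᶠ v in 𝓝[>] (0 : ℝ), AEStronglyMeasurable (fun x => g (v * b x)) μ := by
  filter_upwards [self_mem_nhdsWithin] with v (hv : 0 < v)
  exact hg.comp_quasiMeasurePreserving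
    ((Measure.quasiMeasurePreserving_smul volume hv.ne').comp hb)

theorem quasiMeasurePreserving_snd_mul_of_ae_ne_zero {a : X → ℝ} (ha : Measurable a)
    (ha0 : ∀ᵐ x ∂μ, a x ≠ 0) (s : Set ℝ) :
    Measure.QuasiMeasurePreserving (fun p : X × ℝ => p.2 * a p.1) (μ.prod (volume.restrict s))
      volume := by
  refine QuasiMeasurePreserving.prod_of_right (by fun_prop) ?_
  filter_upwards [ha0] with x hx
  simp only [mul_comm _ (a x)]
  exact (Measure.quasiMeasurePreserving_smul volume hx).mono_left
    Measure.restrict_le_self.absolutelyContinuous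

end FrozenFactor

theorem ae_cos_ne_zero : ∀ᵐ θ : ℝ, cos θ ≠ 0 := by
  have hzeros : {θ : ℝ | cos θ = 0} ⊆ range fun k : ℤ => (2 * (k : ℝ) + 1) * π / 2 :=
    fun θ hθ => (cos_eq_zero_iff.1 hθ).imp fun _ => Eq.symm
  exact ((countable_range _).mono hzeros).ae_notMem volume

theorem ae_sin_ne_zero : ∀ᵐ θ : ℝ, sin θ ≠ 0 := by
  have hzeros : {θ : ℝ | sin θ = 0} ⊆ range fun k : ℤ => (k : ℝ) * π :=
    fun θ hθ => sin_eq_zero_iff.1 hθ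
  exact ((countable_range _).mono hzeros).ae_notMem volume

section RadialDensities

/-- The density at `v` of `√(X² + Y²)` for independent `X`, `Y` with densities `g` on `ℝ` and `q` on
`(0, ∞)`, in the polar coordinates `X = v t`, `Y = v √(1 - t²)`. -/
noncomputable def planarRadialDensity (g q : ℝ → ℝ) (v : ℝ) : ℝ :=
  v * ∫ t in (-1 : ℝ)..1, g (v * t) / √(1 - t ^ 2) * q (v * √(1 - t ^ 2))

/-- The density at `v` of `√(X² + X'² + Y²)` for independent `X`, `X'`, `Y` with densities `g`, `g'`
on `ℝ` and `q` on `(0, ∞)`, in the spherical coordinates `X = v x cos θ`, `X' = v x sin θ`,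
`Y = v √(1 - x²)`. -/
noncomputable def spatialRadialDensity (g g' q : ℝ → ℝ) (v : ℝ) : ℝ :=
  v ^ 2 * ∫ θ in (0 : ℝ)..(2 * π), ∫ x in (0 : ℝ)..1,
    x / √(1 - x ^ 2) * g (v * x * cos θ) * g' (v * x * sin θ) * q (v * √(1 - x ^ 2))

variable {g g' q ρ : ℝ → ℝ} {u₀ : ℝ}

theorem HasMonotoneAux.nonneg_mul_sqrt_one_sub_sq (h : HasMonotoneAux q ρ u₀) {v : ℝ}
    (hv : v ∈ Ioo 0 u₀) (t : ℝ) : 0 ≤ q (v * √(1 - t ^ 2)) :=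
  h.nonneg ((mul_le_of_le_one_right hv.1.le
    (sqrt_le_one.2 (sub_le_self _ (sq_nonneg t)))).trans_lt hv.2)

theorem HasMonotoneAux.tendsto_planarRadialDensity_div (h : HasMonotoneAux q ρ u₀)
    (hΓ : IsGammaAux q ρ) (hg : AEStronglyMeasurable g volume) (hg0 : ContinuousAt g 0) :
    Tendsto (fun v => planarRadialDensity g q v / (√(2 * v * ρ v) * q v)) (𝓝[>] 0)
      (𝓝 (g 0 * Gamma (1 / 2))) := by
  have hweight := h.tendsto_planar_weight hΓ
  simp only [intervalIntegral.integral_of_le (neg_le_self zero_le_one)] at hweight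
  have hnonneg : ∀ᶠ v in 𝓝[>] 0, ∀ᵐ t ∂volume.restrict (Ioc (-1) 1),
      0 ≤ q (v * √(1 - t ^ 2)) / √(1 - t ^ 2) :=
    h.eventually_mem_Ioo.mono fun v hv =>
      .of_forall fun t => div_nonneg (h.nonneg_mul_sqrt_one_sub_sq hv t) (sqrt_nonneg _)
  have hmeas := eventually_aestronglyMeasurable_comp_mul hg
    ((Measure.QuasiMeasurePreserving.id volume).mono_left
      (Measure.restrict_le_self (s := Ioc (-1) 1)).absolutelyContinuous)
  have hunif := tendsto_comp_mul_prod_ae (b := id) hg0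
    ((ae_restrict_mem (μ := volume) measurableSet_Ioc).mono fun t (ht : t ∈ Ioc (-1 : ℝ) 1) =>
      abs_le.2 ⟨ht.1.le, ht.2⟩)
  refine (tendsto_integral_mul_div_of_tendsto (Gamma_pos_of_pos one_half_pos).ne' hweight hnonneg
    hmeas hunif).congr fun v => ?_
  rw [planarRadialDensity, intervalIntegral.integral_of_le (neg_le_self zero_le_one),
    div_div_eq_mul_div, mul_comm v]
  simp only [id_eq, div_mul_eq_mul_div, mul_div_assoc]

theorem tendsto_angular_factor_prod_ae (hg0 : ContinuousAt g 0) (hg0' : ContinuousAt g' 0)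
    (ν : Measure ℝ) [SFinite ν] :
    Tendsto (fun p : ℝ × ℝ × ℝ =>
        g (p.1 * (p.2.2 * cos p.2.1)) * g' (p.1 * (p.2.2 * sin p.2.1)))
      (𝓝[>] 0 ×ˢ ae (ν.prod (volume.restrict (Ioc 0 1)))) (𝓝 (g 0 * g' 0)) := by
  have hradius : ∀ᵐ p : ℝ × ℝ ∂ν.prod (volume.restrict (Ioc 0 1)), |p.2| ≤ 1 :=
    (Measure.quasiMeasurePreserving_snd (μ := ν)).ae ((ae_restrict_mem measurableSet_Ioc).mono
      fun x hx => abs_le.2 ⟨by linarith [hx.1], hx.2⟩)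
  have hcoord : ∀ {a : ℝ → ℝ}, (∀ θ, |a θ| ≤ 1) →
      ∀ᵐ p : ℝ × ℝ ∂ν.prod (volume.restrict (Ioc 0 1)), |p.2 * a p.1| ≤ 1 := fun ha =>
    hradius.mono fun p hp => by
      rw [abs_mul]
      exact mul_le_one₀ hp (abs_nonneg _) (ha _)
  exact (tendsto_comp_mul_prod_ae hg0 (hcoord abs_cos_le_one)).mul
    (tendsto_comp_mul_prod_ae hg0' (hcoord abs_sin_le_one))

theorem eventually_aestronglyMeasurable_angular_factor (hg : AEStronglyMeasurable g volume)
    (hg' : AEStronglyMeasurable g' volume) (s t : Set ℝ) :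
    ∀ᶠ v in 𝓝[>] (0 : ℝ), AEStronglyMeasurable
      (fun p : ℝ × ℝ => g (v * (p.2 * cos p.1)) * g' (v * (p.2 * sin p.1)))
      ((volume.restrict s).prod (volume.restrict t)) := by
  filter_upwards [eventually_aestronglyMeasurable_comp_mul hg
      (quasiMeasurePreserving_snd_mul_of_ae_ne_zero measurable_cos
        (ae_restrict_of_ae ae_cos_ne_zero) t),
    eventually_aestronglyMeasurable_comp_mul hg'
      (quasiMeasurePreserving_snd_mul_of_ae_ne_zero measurable_sin
        (ae_restrict_of_ae ae_sin_ne_zero) t)] with v hcos hsin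
  exact hcos.mul hsin

theorem HasMonotoneAux.tendsto_spatial_weight_prod (h : HasMonotoneAux q ρ u₀)
    (hΓ : IsGammaAux q ρ) :
    Tendsto (fun v => (∫ p : ℝ × ℝ, p.2 * q (v * √(1 - p.2 ^ 2)) / √(1 - p.2 ^ 2)
        ∂(volume.restrict (Ioc 0 (2 * π))).prod (volume.restrict (Ioc 0 1))) / (ρ v * q v / v))
      (𝓝[>] 0) (𝓝 (2 * π)) := by
  have hlim := (h.tendsto_spatial_weight hΓ).const_mul (2 * π)
  rw [mul_one] at hlim
  refine hlim.congr fun v => ?_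
  rw [integral_fun_snd fun x => x * q (v * √(1 - x ^ 2)) / √(1 - x ^ 2), smul_eq_mul,
    measureReal_restrict_apply_univ, volume_real_Ioc_of_le two_pi_pos.le, sub_zero,
    intervalIntegral.integral_of_le zero_le_one, mul_div_assoc (2 * π)]

theorem spatialRadialDensity_eq_integral_prod {v : ℝ}
    (hint : Integrable (fun p : ℝ × ℝ => g (v * (p.2 * cos p.1)) * g' (v * (p.2 * sin p.1)) *
        (p.2 * q (v * √(1 - p.2 ^ 2)) / √(1 - p.2 ^ 2)))
      ((volume.restrict (Ioc 0 (2 * π))).prod (volume.restrict (Ioc 0 1)))) :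
    spatialRadialDensity g g' q v =
      v ^ 2 * ∫ p : ℝ × ℝ, g (v * (p.2 * cos p.1)) * g' (v * (p.2 * sin p.1)) *
        (p.2 * q (v * √(1 - p.2 ^ 2)) / √(1 - p.2 ^ 2))
      ∂(volume.restrict (Ioc 0 (2 * π))).prod (volume.restrict (Ioc 0 1)) := by
  rw [integral_prod _ hint, spatialRadialDensity,
    intervalIntegral.integral_of_le two_pi_pos.le]
  simp only [intervalIntegral.integral_of_le zero_le_one]
  congr! 5
  simp only [← mul_assoc]
  ring

theorem HasMonotoneAux.tendsto_spatialRadialDensity_div (h : HasMonotoneAux q ρ u₀)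
    (hΓ : IsGammaAux q ρ) (hg : AEStronglyMeasurable g volume) (hg0 : ContinuousAt g 0)
    (hg' : AEStronglyMeasurable g' volume) (hg0' : ContinuousAt g' 0) :
    Tendsto (fun v => spatialRadialDensity g g' q v / (v * ρ v * q v)) (𝓝[>] 0)
      (𝓝 (g 0 * g' 0 * (2 * π))) := by
  have hweight := h.tendsto_spatial_weight_prod hΓ
  have hpos : ∀ᵐ p : ℝ × ℝ ∂(volume.restrict (Ioc 0 (2 * π))).prod (volume.restrict (Ioc 0 1)),
      0 < p.2 :=
    Measure.quasiMeasurePreserving_snd.ae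
      ((ae_restrict_mem measurableSet_Ioc).mono fun _ hx => hx.1)
  have hnonneg : ∀ᶠ v in 𝓝[>] 0, ∀ᵐ p : ℝ × ℝ
      ∂(volume.restrict (Ioc 0 (2 * π))).prod (volume.restrict (Ioc 0 1)),
      0 ≤ p.2 * q (v * √(1 - p.2 ^ 2)) / √(1 - p.2 ^ 2) :=
    h.eventually_mem_Ioo.mono fun v hv => hpos.mono fun p hp =>
      div_nonneg (mul_nonneg hp.le (h.nonneg_mul_sqrt_one_sub_sq hv p.2)) (sqrt_nonneg _)
  have hmeas := eventually_aestronglyMeasurable_angular_factor hg hg' (Ioc 0 (2 * π)) (Ioc 0 1)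
  have hunif := tendsto_angular_factor_prod_ae hg0 hg0' (volume.restrict (Ioc 0 (2 * π)))
  refine (tendsto_integral_mul_div_of_tendsto two_pi_pos.ne' hweight hnonneg hmeas hunif).congr' ?_
  filter_upwards [h.eventually_mem_Ioo, eventually_integrable_mul
    (eventually_integrable_of_tendsto_integral_div two_pi_pos.ne' hweight) hmeas hunif]
    with v hv hint
  have hv0 := hv.1
  rw [spatialRadialDensity_eq_integral_prod hint]
  field_simp

theorem stmt5_general (h : HasMonotoneAux q ρ u₀) (hΓ : IsGammaAux q ρ)
    (hg : AEStronglyMeasurable g volume) (hg_cont : ContinuousAt g 0) (hg0 : g 0 ≠ 0)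
    (hg' : AEStronglyMeasurable g' volume) (hg_cont' : ContinuousAt g' 0) (hg0' : g' 0 ≠ 0) :
    Tendsto (fun v => planarRadialDensity g q v /
        (Gamma (1 / 2) * √(2 * v * ρ v) * g 0 * q v)) (𝓝[>] 0) (𝓝 1) ∧
      Tendsto (fun v => spatialRadialDensity g g' q v /
        (2 * π * g 0 * g' 0 * (v * ρ v) * q v)) (𝓝[>] 0) (𝓝 1) ∧
      IsGammaAux (planarRadialDensity g q) ρ := by
  have hplanar := h.tendsto_planarRadialDensity_div hΓ hg hg_cont
  have hspatial := h.tendsto_spatialRadialDensity_div hΓ hg hg_cont hg' hg_cont'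
  have hc : g 0 * Gamma (1 / 2) ≠ 0 := mul_ne_zero hg0 (Gamma_pos_of_pos one_half_pos).ne'
  have hc' : g 0 * g' 0 * (2 * π) ≠ 0 := mul_ne_zero (mul_ne_zero hg0 hg0') two_pi_pos.ne'
  refine ⟨?_, ?_, hΓ.of_tendsto_div (h.tendsto_sqrt_shift_div hΓ) hc hplanar⟩
  · have hlim := hplanar.div_const (g 0 * Gamma (1 / 2))
    rw [div_self hc] at hlim
    refine hlim.congr fun v => ?_
    rw [div_div]
    congr 1
    ring
  · have hlim := hspatial.div_const (g 0 * g' 0 * (2 * π))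
    rw [div_self hc'] at hlim
    refine hlim.congr fun v => ?_
    rw [div_div]
    congr 1
    ring

end RadialDensities

/-- Lemma `Loundge`: asymptotics of
`m(v) = v ∫_{−1}^1 g(vt)/√(1−t²) q(v√(1−t²)) dt` and of the corresponding double integral
`m₂`, and stability of the auxiliary function. -/
theorem stmt5 (g gt q ρ : ℝ → ℝ) (u₀ : ℝ) (hu₀ : 0 < u₀)
    -- g is a bounded probability density, continuous at 0, with g(0) > 0
    (hg_nonneg : ∀ t, 0 ≤ g t) (hg_int : ∫ t, g t = 1)
    (hg_bdd : ∃ M, ∀ t, g t ≤ M) (hg_cont : ContinuousAt g 0) (hg0 : 0 < g 0)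
    -- g̃ is a bounded probability density, continuous at 0, with g̃(0) > 0
    (hgt_nonneg : ∀ t, 0 ≤ gt t) (hgt_int : ∫ t, gt t = 1)
    (hgt_bdd : ∃ M, ∀ t, gt t ≤ M) (hgt_cont : ContinuousAt gt 0) (hgt0 : 0 < gt 0)
    -- q is a probability density on (0,∞), positive, C¹ and strictly increasing on (0,u₀],
    -- in the class Γ at 0 with auxiliary ρ = q/q′, ρ nondecreasing and ρ(s)/s → 0
    (hq_nonneg : ∀ t, 0 ≤ q t) (hq_supp : ∀ t ≤ (0:ℝ), q t = 0)
    (hq_int : ∫ t in Set.Ioi (0:ℝ), q t = 1)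
    (hq_pos : ∀ u ∈ Set.Ioc (0:ℝ) u₀, 0 < q u)
    (hq_C1 : ContDiffOn ℝ 1 q (Set.Ioc 0 u₀))
    (hq_mono : StrictMonoOn q (Set.Ioc 0 u₀))
    (hρdef : ∀ u ∈ Set.Ioc (0:ℝ) u₀, ρ u = q u / deriv q u)
    (hρpos : ∀ u ∈ Set.Ioc (0:ℝ) u₀, 0 < ρ u)
    (hρmono : MonotoneOn ρ (Set.Ioc 0 u₀))
    (hρ0 : Tendsto (fun s => ρ s / s) (nhdsWithin 0 (Set.Ioi 0)) (nhds 0))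
    (hΓ : ∀ x : ℝ, Tendsto (fun h => q (h + ρ h * x) / q h) (nhdsWithin 0 (Set.Ioi 0))
      (nhds (Real.exp x)))
    (m m₂ : ℝ → ℝ)
    (hm : ∀ v, m v =
      v * ∫ t in (-1:ℝ)..1, g (v * t) / Real.sqrt (1 - t^2) * q (v * Real.sqrt (1 - t^2)))
    (hm₂ : ∀ v, m₂ v = v^2 * ∫ θ in (0:ℝ)..(2*π), ∫ x in (0:ℝ)..1,
        x / Real.sqrt (1 - x^2) * g (v * x * Real.cos θ) * gt (v * x * Real.sin θ) *
          q (v * Real.sqrt (1 - x^2))) :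
    -- (i) m(v) ∼ Γ(1/2) √(2vρ(v)) g(0) q(v)
    (Tendsto (fun v => m v / (Real.Gamma (1/2) * Real.sqrt (2 * v * ρ v) * g 0 * q v))
      (nhdsWithin 0 (Set.Ioi 0)) (nhds 1)) ∧
    -- (ii) m₂(v) ∼ 2π g(0) g̃(0) v ρ(v) q(v)
    (Tendsto (fun v => m₂ v / (2 * π * g 0 * gt 0 * (v * ρ v) * q v))
      (nhdsWithin 0 (Set.Ioi 0)) (nhds 1)) ∧
    -- (iii) if m belongs to the class Γ at 0, then ρ is an auxiliary function for m
    ((∃ σ : ℝ → ℝ, (∀ s, 0 < s → 0 < σ s) ∧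
        Tendsto (fun s => σ s / s) (nhdsWithin 0 (Set.Ioi 0)) (nhds 0) ∧
        (∀ x : ℝ, Tendsto (fun h => m (h + σ h * x) / m h) (nhdsWithin 0 (Set.Ioi 0))
          (nhds (Real.exp x)))) →
      ∀ x : ℝ, Tendsto (fun v => m (v + ρ v * x) / m v) (nhdsWithin 0 (Set.Ioi 0))
        (nhds (Real.exp x))) := by
  have hgm := (Integrable.of_integral_ne_zero (by rw [hg_int]; exact one_ne_zero)).1
  have hgtm := (Integrable.of_integral_ne_zero (by rw [hgt_int]; exact one_ne_zero)).1
  obtain rfl : m = planarRadialDensity g q := funext hm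
  obtain rfl : m₂ = spatialRadialDensity g gt q := funext hm₂
  obtain ⟨hi, hii, hiii⟩ := stmt5_general
    (.of_eq_div_deriv hu₀ hq_supp hq_pos hq_C1 hρdef hρpos hρmono) ⟨hρ0, hΓ⟩
    hgm hg_cont hg0.ne' hgtm hgt_cont hgt0.ne'
  exact ⟨hi, hii, fun _ => hiii.tendsto_ratio⟩
end

section
/- Let Y be a nonnegative real random variable whose cumulative distribution function F(h) = P(Y ≤ h) satisfies F(h) > 0 for all h > 0 and belongs to the class Γ at 0 with auxiliary function ρ, where ρ is nondecreasing near 0 and ρ(s)/s → 0 as s → 0⁺. Let the kernel K : [0,∞) → [0,∞) be bounded, supported on [0,1], continuously differentiable on [0,1] with bounded derivative, and K(1) > 0. Assume in addition that ρ is continuously differentiable near 0 and there is d > 0 with t ρ′(t)/ρ(t) → d as t → 0⁺ (so ρ is regularly varying at 0 with positive index d). Then v(h) = E[K(Y/h)·Y·ρ(Y)] satisfies v(h) ∼ K(1)·h·ρ(h)·F(h) as h → 0⁺, i.e. the ratio of the two sides tends to 1. -/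
open MeasureTheory Filter Real Set

open scoped ProbabilityTheory Topology

/-!
Membership in the class Γ with `ρ(s) = o(s)` forces `F` to vary rapidly at `0`, so conditionally on
`Y ≤ h` the ratio `Y / h` concentrates at `1`. After division by `h ρ(h) F(h)`, the integral is the
conditional expectation of a bounded function of `Y / h` whose value near `1` tends to `K 1`,
because `K` is left-continuous at `1` and `ρ`, being monotone and regularly varying, satisfies
`ρ(u h) / ρ(h) → 1` jointly as `h → 0⁺` and `u → 1⁻`. Regular variation of `ρ` comes from the mean
value inequality for `s ↦ log ρ(eˢ)`, whose derivative is `t ρ'(t) / ρ(t)` at `t = eˢ`.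
-/

/-- Rapid variation at `0` (with index `∞`): `F` is asymptotically negligible at `c * h` compared
with `h` for every `c < 1`. For a distribution function, this expresses concentration of the
conditional law given `Y ≤ h` near `h`. -/
def RapidlyVaryingAtZero (F : ℝ → ℝ) : Prop :=
  ∀ c ∈ Ioo (0 : ℝ) 1, Tendsto (fun h => F (c * h) / F h) (𝓝[>] 0) (𝓝 0)

/-- Karamata's regular variation at `0` with index `d`; the index `d = 0` is slow variation. -/
def RegularlyVaryingAtZero (ρ : ℝ → ℝ) (d : ℝ) : Prop :=
  ∀ c > 0, Tendsto (fun t => ρ (c * t) / ρ t) (𝓝[>] 0) (𝓝 (c ^ d))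

/-- The integrand `K(Y/h) · Y · ρ(Y)` divided by `h · ρ(h)`, as a function of `h` and of the
rescaled variable `u = Y / h`. -/
noncomputable def rescaledIntegrand (K ρ : ℝ → ℝ) (h u : ℝ) : ℝ :=
  K u * u * (ρ (u * h) / ρ h)

section ConvergenceOfMeans

variable {Ω E : Type*} [MeasurableSpace Ω] [NormedAddCommGroup E] [NormedSpace ℝ E]
  [CompleteSpace E]

theorem norm_integral_sub_le_add_measureReal {μ : Measure Ω} [IsProbabilityMeasure μ] {f : Ω → E}
    {L : E} {B ε : ℝ} (hf : AEStronglyMeasurable f μ) (hB : ∀ᵐ ω ∂μ, ‖f ω‖ ≤ B) (hε : 0 ≤ ε) :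
    ‖∫ ω, f ω ∂μ - L‖ ≤ ε + (B + ‖L‖) * μ.real {ω | ε ≤ ‖f ω - L‖} := by
  set S := {ω | ε ≤ ‖f ω - L‖}
  have hS : NullMeasurableSet S μ :=
    nullMeasurableSet_le aemeasurable_const
      (hf.sub aestronglyMeasurable_const).norm.aemeasurable
  have hfi : Integrable f μ := .of_bound hf B hB
  have hSi : Integrable (S.indicator fun _ => B + ‖L‖) μ := (integrable_const _).indicator₀ hS
  have hpointwise : ∀ᵐ ω ∂μ, ‖f ω - L‖ ≤ ε + S.indicator (fun _ => B + ‖L‖) ω := by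
    filter_upwards [hB] with ω hω
    by_cases hωS : ω ∈ S
    · rw [indicator_of_mem hωS]
      linarith [norm_sub_le (f ω) L]
    · rw [indicator_of_notMem hωS, add_zero]
      exact (not_le.1 hωS).le
  calc ‖∫ ω, f ω ∂μ - L‖ = ‖∫ ω, (f ω - L) ∂μ‖ := by
        rw [integral_sub hfi (integrable_const L), integral_const, probReal_univ, one_smul]
    _ ≤ ∫ ω, ε + S.indicator (fun _ => B + ‖L‖) ω ∂μ :=
        norm_integral_le_of_norm_le ((integrable_const ε).add hSi) hpointwise
    _ = ε + (B + ‖L‖) * μ.real S := by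
        rw [integral_add (integrable_const ε) hSi, integral_indicator₀ hS, setIntegral_const,
          integral_const, probReal_univ, one_smul, smul_eq_mul, mul_comm]

theorem tendsto_integral_of_tendsto_measureReal {ι : Type*} {l : Filter ι} {μ : ι → Measure Ω}
    {f : ι → Ω → E} {L : E} {B : ℝ} (hμ : ∀ᶠ i in l, IsProbabilityMeasure (μ i))
    (hf : ∀ᶠ i in l, AEStronglyMeasurable (f i) (μ i))
    (hB : ∀ᶠ i in l, ∀ᵐ ω ∂μ i, ‖f i ω‖ ≤ B)
    (hL : ∀ ε > 0, Tendsto (fun i => (μ i).real {ω | ε ≤ ‖f i ω - L‖}) l (𝓝 0)) :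
    Tendsto (fun i => ∫ ω, f i ω ∂μ i) l (𝓝 L) := by
  rw [Metric.tendsto_nhds]
  intro ε hε
  have hbound : Tendsto
      (fun i => ε / 2 + (B + ‖L‖) * (μ i).real {ω | ε / 2 ≤ ‖f i ω - L‖}) l (𝓝 (ε / 2)) := by
    simpa only [mul_zero, add_zero] using
      ((hL (ε / 2) (half_pos hε)).const_mul (B + ‖L‖)).const_add (ε / 2)
  filter_upwards [hμ, hf, hB, hbound.eventually_lt_const (half_lt_self hε)] with i _ hfi hBi hi
  rw [dist_eq_norm]
  exact (norm_integral_sub_le_add_measureReal hfi hBi (half_pos hε).le).trans_lt hi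

end ConvergenceOfMeans

section RegularVariation

theorem tendsto_add_sub_of_hasDerivAt_atBot {E : Type*} [NormedAddCommGroup E] [NormedSpace ℝ E]
    {g g' : ℝ → E} {d : E} (hg : ∀ᶠ s in atBot, HasDerivAt g (g' s) s)
    (hg' : Tendsto g' atBot (𝓝 d)) (a : ℝ) :
    Tendsto (fun s => g (s + a) - g s) atBot (𝓝 (a • d)) := by
  rw [Metric.tendsto_nhds]
  intro ε hε
  obtain ⟨δ, hδ, hδε⟩ := exists_pos_mul_lt hε |a|
  obtain ⟨S, hS⟩ := eventually_atBot.1 (hg.and (hg'.eventually (Metric.closedBall_mem_nhds d hδ)))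
  have hderiv : ∀ s ∈ Iic S, HasDerivWithinAt (fun s => g s - s • d) (g' s - d) (Iic S) s := by
    intro s hs
    simpa only [one_smul, id_eq] using
      ((hS s hs).1.fun_sub ((hasDerivAt_id s).smul_const d)).hasDerivWithinAt
  have hderiv_le : ∀ s ∈ Iic S, ‖g' s - d‖ ≤ δ := fun s hs => by
    simpa only [← dist_eq_norm] using! (hS s hs).2
  filter_upwards [eventually_le_atBot S, eventually_le_atBot (S - a)] with s hs hsa
  have hmvt := (convex_Iic S).norm_image_sub_le_of_norm_hasDerivWithin_le hderiv hderiv_le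
    (mem_Iic.2 hs) (mem_Iic.2 (le_sub_iff_add_le.1 hsa))
  rw [add_sub_cancel_left, Real.norm_eq_abs, mul_comm] at hmvt
  rw [dist_eq_norm]
  refine lt_of_eq_of_lt ?_ (hmvt.trans_lt hδε)
  congr 1
  module

theorem eventually_differentiableAt_of_differentiableOn_Ioc {E : Type*} [NormedAddCommGroup E]
    [NormedSpace ℝ E] {f : ℝ → E} {a b : ℝ} (hab : a < b) (hf : DifferentiableOn ℝ f (Ioc a b)) :
    ∀ᶠ t in 𝓝[>] a, DifferentiableAt ℝ f t := by
  filter_upwards [Ioo_mem_nhdsGT hab] with t ht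
  exact hf.differentiableAt (Ioc_mem_nhds ht.1 ht.2)

theorem regularlyVaryingAtZero_of_tendsto_mul_deriv_div {ρ : ℝ → ℝ} {d : ℝ}
    (hpos : ∀ t, 0 < t → 0 < ρ t) (hdiff : ∀ᶠ t in 𝓝[>] 0, DifferentiableAt ℝ ρ t)
    (hlim : Tendsto (fun t => t * deriv ρ t / ρ t) (𝓝[>] 0) (𝓝 d)) :
    RegularlyVaryingAtZero ρ d := by
  intro c hc
  have hlog_deriv : ∀ᶠ s in atBot, HasDerivAt (fun s => log (ρ (exp s)))
      (exp s * deriv ρ (exp s) / ρ (exp s)) s := by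
    filter_upwards [tendsto_exp_atBot_nhdsGT.eventually hdiff] with s hs
    rw [mul_comm (exp s)]
    exact (hs.hasDerivAt.comp s (hasDerivAt_exp s)).log (hpos _ (exp_pos s)).ne'
  have hincrement : Tendsto (fun t => log (ρ (exp (log t + log c))) - log (ρ (exp (log t))))
      (𝓝[>] 0) (𝓝 (log c * d)) :=
    (tendsto_add_sub_of_hasDerivAt_atBot hlog_deriv (hlim.comp tendsto_exp_atBot_nhdsGT)
      (log c)).comp tendsto_log_nhdsGT_zero
  rw [rpow_def_of_pos hc]
  refine hincrement.rexp.congr' ?_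
  filter_upwards [self_mem_nhdsWithin] with t (ht : 0 < t)
  rw [exp_add, exp_log ht, exp_log hc, exp_sub, mul_comm t c, exp_log (hpos _ (mul_pos hc ht)),
    exp_log (hpos t ht)]

theorem ratio_le_one_of_monotoneOn {ρ : ℝ → ℝ} {δ h u : ℝ} (hpos : ∀ t, 0 < t → 0 < ρ t)
    (hmono : MonotoneOn ρ (Ioc 0 δ)) (hh : h ∈ Ioc 0 δ) (hu : u ∈ Ioc (0 : ℝ) 1) :
    ρ (u * h) / ρ h ≤ 1 := by
  have huh : u * h ≤ h := mul_le_of_le_one_left hh.1.le hu.2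
  exact (div_le_one (hpos h hh.1)).2 (hmono ⟨mul_pos hu.1 hh.1, huh.trans hh.2⟩ hh huh)

theorem RegularlyVaryingAtZero.tendsto_ratio_prod {ρ : ℝ → ℝ} {d : ℝ}
    (hreg : RegularlyVaryingAtZero ρ d) (hpos : ∀ t, 0 < t → 0 < ρ t)
    (hmono : ∃ δ > 0, MonotoneOn ρ (Ioc 0 δ)) :
    Tendsto (fun p : ℝ × ℝ => ρ (p.2 * p.1) / ρ p.1) (𝓝[>] 0 ×ˢ 𝓝[≤] 1) (𝓝 1) := by
  obtain ⟨δ, hδ, hmono⟩ := hmono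
  refine tendsto_order.2 ⟨fun a ha => ?_, fun a ha => ?_⟩
  · have hpow : Tendsto (fun c : ℝ => c ^ d) (𝓝[<] 1) (𝓝 1) := by
      simpa only [one_rpow] using
        (continuousAt_rpow_const 1 d (.inl one_ne_zero)).tendsto.mono_left nhdsWithin_le_nhds
    obtain ⟨c, hac, hc⟩ :=
      ((hpow.eventually_const_lt ha).and (Ioo_mem_nhdsLT zero_lt_one)).exists
    filter_upwards [(((hreg c hc.1).eventually_const_lt hac).and
      (eventually_mem_set.2 (Ioc_mem_nhdsGT hδ))).prod_mk
      (eventually_mem_set.2 (Ioc_mem_nhdsLE hc.2))] with ⟨h, u⟩ ⟨⟨hah, hh⟩, hu⟩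
    have hcu : c * h ≤ u * h := mul_le_mul_of_nonneg_right hu.1.le hh.1.le
    have huh : u * h ≤ δ := (mul_le_of_le_one_left hh.1.le hu.2).trans hh.2
    have hch : 0 < c * h := mul_pos hc.1 hh.1
    exact hah.trans_le (div_le_div_of_nonneg_right
      (hmono ⟨hch, hcu.trans huh⟩ ⟨hch.trans_le hcu, huh⟩ hcu) (hpos h hh.1).le)
  · filter_upwards [prod_mem_prod (Ioc_mem_nhdsGT hδ) (Ioc_mem_nhdsLE zero_lt_one)]
      with ⟨h, u⟩ ⟨hh, hu⟩
    exact (ratio_le_one_of_monotoneOn hpos hmono hh hu).trans_lt ha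

end RegularVariation

theorem rapidlyVaryingAtZero_of_tendsto_exp {F ρ : ℝ → ℝ} (hmono : Monotone F)
    (hpos : ∀ h, 0 < h → 0 < F h) (hρ : Tendsto (fun s => ρ s / s) (𝓝[>] 0) (𝓝 0))
    (hΓ : ∀ x : ℝ, Tendsto (fun h => F (h + ρ h * x) / F h) (𝓝[>] 0) (𝓝 (exp x))) :
    RapidlyVaryingAtZero F := by
  intro c hc
  refine tendsto_order.2 ⟨fun a ha => ?_, fun ε hε => ?_⟩
  · filter_upwards [self_mem_nhdsWithin] with h (hh : 0 < h)
    exact ha.trans (div_pos (hpos _ (mul_pos hc.1 hh)) (hpos h hh))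
  · obtain ⟨x, hx⟩ := (tendsto_exp_atBot.eventually_lt_const hε).exists
    have hρx : Tendsto (fun h => ρ h / h * x) (𝓝[>] 0) (𝓝 0) := by
      simpa only [zero_mul] using hρ.mul_const x
    filter_upwards [(hΓ x).eventually_lt_const hx, hρx.eventually_const_lt (sub_neg.2 hc.2),
      self_mem_nhdsWithin] with h hΓh hρh (hh : 0 < h)
    have hle : c * h ≤ h + ρ h * x := by
      rw [div_mul_eq_mul_div, lt_div_iff₀ hh] at hρh
      linarith
    exact (div_le_div_of_nonneg_right (hmono hle) (hpos h hh).le).trans_lt hΓh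

section Conditioning

variable {Ω : Type*} [MeasurableSpace Ω] {P : Measure Ω} {Y : Ω → ℝ}

theorem monotone_measureReal_setOf_le [IsFiniteMeasure P] :
    Monotone fun h => P.real {ω | Y ω ≤ h} :=
  fun _ _ hab => measureReal_mono fun _ hω => le_trans hω hab

theorem measureReal_cond_setOf_le (hY : Measurable Y) {a b : ℝ} (hab : a ≤ b) :
    P[|{ω | Y ω ≤ b}].real {ω | Y ω ≤ a} = P.real {ω | Y ω ≤ a} / P.real {ω | Y ω ≤ b} := by
  have hinter : {ω | Y ω ≤ b} ∩ {ω | Y ω ≤ a} = {ω | Y ω ≤ a} :=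
    inter_eq_right.2 fun _ hω => le_trans hω hab
  rw [measureReal_def, ProbabilityTheory.cond_apply (measurableSet_le hY measurable_const), hinter,
    ENNReal.toReal_mul, ENNReal.toReal_inv, ← div_eq_inv_mul, measureReal_def, measureReal_def]

theorem tendsto_integral_cond_of_rapidlyVarying [IsFiniteMeasure P] {E : Type*}
    [NormedAddCommGroup E] [NormedSpace ℝ E] [CompleteSpace E]
    (hY : Measurable Y) (hY0 : ∀ ω, 0 ≤ Y ω)
    (hpos : ∀ h, 0 < h → 0 < P.real {ω | Y ω ≤ h})
    (hrapid : RapidlyVaryingAtZero fun h => P.real {ω | Y ω ≤ h})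
    {φ : ℝ → ℝ → E} {L : E} {B : ℝ}
    (hmeas : ∀ᶠ h in 𝓝[>] 0,
      AEStronglyMeasurable (fun ω => φ h (Y ω / h)) P[|{ω | Y ω ≤ h}])
    (hB : ∀ᶠ h in 𝓝[>] 0, ∀ u ∈ Icc (0 : ℝ) 1, ‖φ h u‖ ≤ B)
    (hφ : Tendsto (Function.uncurry φ) (𝓝[>] 0 ×ˢ 𝓝[≤] 1) (𝓝 L)) :
    Tendsto (fun h => ∫ ω, φ h (Y ω / h) ∂P[|{ω | Y ω ≤ h}]) (𝓝[>] 0) (𝓝 L) := by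
  have hle_ae (h : ℝ) : ∀ᵐ ω ∂P[|{ω | Y ω ≤ h}], Y ω ≤ h :=
    ProbabilityTheory.ae_cond_mem (measurableSet_le hY measurable_const)
  refine tendsto_integral_of_tendsto_measureReal (B := B) ?_ hmeas ?_ fun ε hε => ?_
  · filter_upwards [self_mem_nhdsWithin] with h (hh : 0 < h)
    exact ProbabilityTheory.cond_isProbabilityMeasure fun h0 =>
      (hpos h hh).ne' ((measureReal_eq_zero_iff).2 h0)
  · filter_upwards [hB, self_mem_nhdsWithin] with h hBh (hh : 0 < h)
    filter_upwards [hle_ae h] with ω hω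
    exact hBh _ ⟨div_nonneg (hY0 ω) hh.le, (div_le_one hh).2 hω⟩
  · obtain ⟨p, hp, q, hq, hpq⟩ := eventually_prod_iff.1 (hφ.eventually (Metric.ball_mem_nhds L hε))
    obtain ⟨c, ⟨hc_half, hc1⟩, hc⟩ :=
      (mem_nhdsLE_iff_exists_mem_Ico_Ioc_subset (one_half_lt_one (α := ℝ))).1 hq
    have hc0 : 0 < c := one_half_pos.trans_le hc_half
    refine squeeze_zero' (.of_forall fun h => measureReal_nonneg) ?_ (hrapid c ⟨hc0, hc1⟩)
    filter_upwards [hp, self_mem_nhdsWithin] with h hph (hh : 0 < h)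
    rw [← measureReal_cond_setOf_le hY (mul_le_of_le_one_left hh.le hc1.le)]
    refine ENNReal.toReal_mono (measure_ne_top _ _) (measure_mono_ae ?_)
    filter_upwards [hle_ae h] with ω hω (hfar : ε ≤ ‖φ h (Y ω / h) - L‖)
    by_contra hYc
    have hnear : φ h (Y ω / h) ∈ Metric.ball L ε :=
      hpq hph (hc ⟨(lt_div_iff₀ hh).2 (not_le.1 hYc), (div_le_one hh).2 hω⟩)
    exact hfar.not_gt (mem_ball_iff_norm.1 hnear)

end Conditioning

section RescaledIntegrand

variable {K ρ : ℝ → ℝ}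

theorem abs_rescaledIntegrand_le {δ h u M : ℝ} (hpos : ∀ t, 0 < t → 0 < ρ t)
    (hmono : MonotoneOn ρ (Ioc 0 δ)) (hK : |K u| ≤ M) (hh : h ∈ Ioc 0 δ)
    (hu : u ∈ Icc (0 : ℝ) 1) : |rescaledIntegrand K ρ h u| ≤ M := by
  have hM : 0 ≤ M := (abs_nonneg _).trans hK
  rcases hu.1.eq_or_lt with rfl | hu0
  · simpa [rescaledIntegrand] using hM
  · have hratio := ratio_le_one_of_monotoneOn hpos hmono hh ⟨hu0, hu.2⟩
    have hratio0 : 0 ≤ ρ (u * h) / ρ h :=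
      (div_pos (hpos _ (mul_pos hu0 hh.1)) (hpos h hh.1)).le
    calc |rescaledIntegrand K ρ h u| = |K u| * (u * (ρ (u * h) / ρ h)) := by
          rw [rescaledIntegrand, mul_assoc, abs_mul, abs_of_nonneg (mul_nonneg hu.1 hratio0)]
      _ ≤ |K u| * 1 := by gcongr; exact mul_le_one₀ hu.2 hratio0 hratio
      _ ≤ M := by rwa [mul_one]

theorem tendsto_rescaledIntegrand {d : ℝ} (hK : ContinuousWithinAt K (Iic 1) 1)
    (hreg : RegularlyVaryingAtZero ρ d) (hpos : ∀ t, 0 < t → 0 < ρ t)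
    (hmono : ∃ δ > 0, MonotoneOn ρ (Ioc 0 δ)) :
    Tendsto (Function.uncurry (rescaledIntegrand K ρ)) (𝓝[>] 0 ×ˢ 𝓝[≤] 1) (𝓝 (K 1)) := by
  have hKu : Tendsto (fun u => K u * u) (𝓝[≤] 1) (𝓝 (K 1)) := by
    simpa only [mul_one, id_eq] using hK.tendsto.mul (tendsto_id.mono_left nhdsWithin_le_nhds)
  simpa only [mul_one] using! (hKu.comp tendsto_snd).mul (hreg.tendsto_ratio_prod hpos hmono)

variable {Ω : Type*} [MeasurableSpace Ω] {P : Measure Ω} {Y : Ω → ℝ}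

theorem aestronglyMeasurable_rescaledIntegrand (hY : Measurable Y) (hY0 : ∀ ω, 0 ≤ Y ω)
    (hρ : Measurable ρ) (hK : Measurable fun u : Icc (0 : ℝ) 1 => K u) {h : ℝ} (hh : 0 < h) :
    AEStronglyMeasurable (fun ω => rescaledIntegrand K ρ h (Y ω / h)) P[|{ω | Y ω ≤ h}] := by
  have hKY : AEMeasurable (fun ω => K (Y ω / h)) P[|{ω | Y ω ≤ h}] := by
    refine (aemeasurable_restrict_of_measurable_subtype
      (measurableSet_le hY measurable_const) ?_).smul_measure _
    exact hK.comp (((hY.comp measurable_subtype_coe).div_const h).subtype_mk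
      (h := fun ω => ⟨div_nonneg (hY0 ω) hh.le, (div_le_one hh).2 ω.2⟩))
  have hYh : Measurable fun ω => Y ω / h := hY.div_const h
  exact ((hKY.mul hYh.aemeasurable).mul
    ((hρ.comp (hYh.mul_const h)).div_const (ρ h)).aemeasurable).aestronglyMeasurable

theorem integral_cond_rescaledIntegrand (hK : ∀ s, 1 < s → K s = 0) {h : ℝ} (hh : 0 < h) :
    ∫ ω, rescaledIntegrand K ρ h (Y ω / h) ∂P[|{ω | Y ω ≤ h}] =
      (∫ ω, K (Y ω / h) * Y ω * ρ (Y ω) ∂P) / (h * ρ h * P.real {ω | Y ω ≤ h}) := by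
  have hrescale : ∀ ω, rescaledIntegrand K ρ h (Y ω / h) =
      K (Y ω / h) * Y ω * ρ (Y ω) / (h * ρ h) := fun ω => by
    rw [rescaledIntegrand, div_mul_cancel₀ _ hh.ne']
    ring
  have hsupp : ∀ ω ∉ {ω | Y ω ≤ h}, K (Y ω / h) * Y ω * ρ (Y ω) / (h * ρ h) = 0 := fun ω hω => by
    rw [hK _ ((one_lt_div hh).2 (not_le.1 hω)), zero_mul, zero_mul, zero_div]
  simp only [hrescale]
  rw [ProbabilityTheory.cond, integral_smul_measure,
    setIntegral_eq_integral_of_forall_compl_eq_zero hsupp, integral_div, ENNReal.toReal_inv,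
    smul_eq_mul, ← div_eq_inv_mul, div_div, measureReal_def]

end RescaledIntegrand

theorem stmt12_general {Ω : Type*} [MeasurableSpace Ω] {P : Measure Ω} [IsFiniteMeasure P]
    {Y : Ω → ℝ} (hY : Measurable Y) (hY0 : ∀ ω, 0 ≤ Y ω)
    {F ρ : ℝ → ℝ} (hF : ∀ h, F h = P.real {ω | Y ω ≤ h}) (hFpos : ∀ h, 0 < h → 0 < F h)
    (hFrapid : RapidlyVaryingAtZero F) (hρmeas : Measurable ρ) (hρpos : ∀ s, 0 < s → 0 < ρ s)
    (hρmono : ∃ δ > 0, MonotoneOn ρ (Ioc 0 δ)) {d : ℝ} (hρreg : RegularlyVaryingAtZero ρ d)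
    {K : ℝ → ℝ} (hK_meas : Measurable fun u : Icc (0 : ℝ) 1 => K u)
    (hK_bdd : ∃ M, ∀ u ∈ Icc (0 : ℝ) 1, |K u| ≤ M) (hK_supp : ∀ s, 1 < s → K s = 0)
    (hK_left : ContinuousWithinAt K (Iic 1) 1) (hK1 : K 1 ≠ 0) :
    Tendsto (fun h => (∫ ω, K (Y ω / h) * Y ω * ρ (Y ω) ∂P) / (K 1 * h * ρ h * F h))
      (𝓝[>] 0) (𝓝 1) := by
  obtain rfl : F = fun h => P.real {ω | Y ω ≤ h} := funext hF
  obtain ⟨δ, hδ, hmono⟩ := hρmono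
  obtain ⟨M, hM⟩ := hK_bdd
  have hmeas : ∀ᶠ h in 𝓝[>] 0, AEStronglyMeasurable
      (fun ω => rescaledIntegrand K ρ h (Y ω / h)) P[|{ω | Y ω ≤ h}] := by
    filter_upwards [self_mem_nhdsWithin] with h hh
    exact aestronglyMeasurable_rescaledIntegrand hY hY0 hρmeas hK_meas hh
  have hbound : ∀ᶠ h in 𝓝[>] 0, ∀ u ∈ Icc (0 : ℝ) 1, ‖rescaledIntegrand K ρ h u‖ ≤ M := by
    filter_upwards [Ioc_mem_nhdsGT hδ] with h hh u hu
    exact abs_rescaledIntegrand_le hρpos hmono (hM u hu) hh hu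
  have hmean := (tendsto_integral_cond_of_rapidlyVarying hY hY0 hFpos hFrapid hmeas hbound
    (tendsto_rescaledIntegrand hK_left hρreg hρpos ⟨δ, hδ, hmono⟩)).div_const (K 1)
  rw [div_self hK1] at hmean
  refine hmean.congr' ?_
  filter_upwards [self_mem_nhdsWithin] with h hh
  rw [integral_cond_rescaledIntegrand hK_supp hh, div_div]
  congr 1
  ring

/-- second part of Proposition `Compay`: if moreover `ρ` is regularly
varying at 0 with positive index `d`, then `v(h) = E[K(Y/h)·Y·ρ(Y)] ∼ K(1)·h·ρ(h)·F(h)`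
as `h → 0⁺`. -/
theorem stmt12 {Ω : Type*} [MeasurableSpace Ω] (P : Measure Ω) [IsProbabilityMeasure P]
    (Y : Ω → ℝ) (hYmeas : Measurable Y) (hYnonneg : ∀ ω, 0 ≤ Y ω)
    (F ρ : ℝ → ℝ) (hF : ∀ h, F h = (P {ω | Y ω ≤ h}).toReal)
    (hFpos : ∀ h, 0 < h → 0 < F h)
    (hρmeas : Measurable ρ) (hρpos : ∀ s, 0 < s → 0 < ρ s)
    (hρmono : ∃ δ > 0, MonotoneOn ρ (Set.Ioc 0 δ))
    (hρ0 : Tendsto (fun s => ρ s / s) (nhdsWithin 0 (Set.Ioi 0)) (nhds 0))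
    (hΓ : ∀ x : ℝ, Tendsto (fun h => F (h + ρ h * x) / F h) (nhdsWithin 0 (Set.Ioi 0))
      (nhds (Real.exp x)))
    (K : ℝ → ℝ) (hK_nonneg : ∀ s, 0 ≤ K s) (hK_bdd : ∃ M, ∀ s, K s ≤ M)
    (hK_supp : ∀ s, 1 < s → K s = 0)
    (hK_C1 : ContDiffOn ℝ 1 K (Set.Icc 0 1))
    (hK_deriv_bdd : ∃ M, ∀ s ∈ Set.Icc (0:ℝ) 1, |derivWithin K (Set.Icc 0 1) s| ≤ M)
    (hK1 : 0 < K 1)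
    -- ρ is C¹ near 0 and regularly varying at 0 with positive index d
    (hρC1 : ∃ δ > 0, ContDiffOn ℝ 1 ρ (Set.Ioc 0 δ))
    (d : ℝ) (hd : 0 < d)
    (hreg : Tendsto (fun t => t * deriv ρ t / ρ t) (nhdsWithin 0 (Set.Ioi 0)) (nhds d)) :
    Tendsto (fun h =>
        (∫ ω, K (Y ω / h) * Y ω * ρ (Y ω) ∂P) / (K 1 * h * ρ h * F h))
      (nhdsWithin 0 (Set.Ioi 0)) (nhds 1) := by
  have hFrapid : RapidlyVaryingAtZero F :=
    rapidlyVaryingAtZero_of_tendsto_exp (funext hF ▸ monotone_measureReal_setOf_le) hFpos hρ0 hΓ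
  obtain ⟨δ, hδ, hρδ⟩ := hρC1
  have hρreg : RegularlyVaryingAtZero ρ d := regularlyVaryingAtZero_of_tendsto_mul_deriv_div hρpos
    (eventually_differentiableAt_of_differentiableOn_Ioc hδ
      (hρδ.differentiableOn one_ne_zero)) hreg
  exact stmt12_general hYmeas hYnonneg hF hFpos hFrapid hρmeas hρpos hρmono hρreg
    hK_C1.continuousOn.domRestrict.measurable
    (hK_bdd.imp fun M hM u _ => (abs_of_nonneg (hK_nonneg u)).trans_le (hM u)) hK_supp
    ((continuousWithinAt_Icc_iff_Iic zero_lt_one).1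
      (hK_C1.continuousOn 1 (right_mem_Icc.2 zero_le_one))) hK1.ne'
end
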